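/- Assume G is an elementary abelian 2-group with |G| = n and the image of n in F equals 1 (i.e. n ≡ 1 mod p where p = char F). Then there is a surjective F-algebra homomorphism from the Terwilliger F-algebra T onto M₄(F) × F × F whose kernel K is a nilpotent two-sided ideal of T (there exists m ≥ 1 such that any product of m elements of K equals the zero matrix). Consequently T/Rad T ≅ M₄(F) ⊕ M₁(F) ⊕ M₁(F) as F-algebras, where Rad T = K is the Jacobson radical of T. -/

import Mathlib

open Matrix

abbrev XG (G : Type) [Group G] : Type := {v : Fin 3 → G // v 0 * v 1 = v 2}

def cIdx : Fin 5 → Fin 3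
  | 0 => 0
  | 1 => 0
  | 2 => 1
  | 3 => 2
  | 4 => 0

def rel {G : Type} [Group G] (i : Fin 5) (y z : XG G) : Prop :=
  if i = 0 then y = z
  else if i = 4 then ∀ d : Fin 3, y.1 d ≠ z.1 d
  else y ≠ z ∧ y.1 (cIdx i) = z.1 (cIdx i)

instance {G : Type} [Group G] [DecidableEq G] (i : Fin 5) (y z : XG G) :
    Decidable (rel i y z) := by
  unfold rel
  infer_instance

def Adj (F : Type) [Field F] {G : Type} [Group G] [DecidableEq G] (i : Fin 5) :
    Matrix (XG G) (XG G) F :=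
  Matrix.of fun y z => if rel i y z then 1 else 0

def DualE (F : Type) [Field F] {G : Type} [Group G] [DecidableEq G] (x : XG G) (i : Fin 5) :
    Matrix (XG G) (XG G) F :=
  Matrix.of fun y z => if y = z ∧ rel i x y then 1 else 0

def AllOne (F : Type) [Field F] (G : Type) [Group G] : Matrix (XG G) (XG G) F :=
  Matrix.of fun _ _ => 1

def genSet (F : Type) [Field F] (G : Type) [Group G] [Fintype G] [DecidableEq G]
    (x : XG G) : Set (Matrix (XG G) (XG G) F) :=
  {M | ∃ a b c : Fin 5, M = DualE F x a * Adj F b * DualE F x c}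

def TerwilligerAlg (F : Type) [Field F] (G : Type) [Group G] [Fintype G] [DecidableEq G]
    (x : XG G) : Subalgebra F (Matrix (XG G) (XG G) F) :=
  Algebra.adjoin F (genSet F G x)

/-!
After normalizing coordinates at the base point `x`, the points `y` are the points of a 3-net in
which any two coordinates determine the third, and, since `G` has exponent `2`, the line
`coord x i = 1` consists of the points whose two other coordinates agree. As `|G| = 1` in `F`,
`T` preserves a flag of five subspaces of `F ^ X_G`, with successive quotients spanned by

* the indicators of `R_1, …, R_4`,
* the indicator of `x`,
* differences of two lines with the same parameter `h ≠ 1`, restricted to `R_4`,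
* for each `h ≠ 1`, four vectors supported on `R_1, …, R_4` respectively,
* the points of `R_4`,

and acts on them by copies of representations `ρ`, `s`, `e`, `ρ`, `e` of dimension `4`, `1`, `1`,
`4`, `1`. The pairs `(t, (ρ, e, s))` with `t` acting on the quotients in this way form a subalgebra
of `Mat × (M₄(F) × F × F)`. It contains a lift of every generator of `T` and `(0, b)` only for
`b = 0`, so over `T` it is the graph of a homomorphism. An element of the kernel lowers the flag, so
five of them multiply to zero. For surjectivity, `E_i B E_j` is a nonzero multiple of a matrix unit
of the block `ρ` when `B` is the matrix of `R_0 ∪ R_k` for some `k ∈ {1, 2, 3}` other than `i, j`.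
-/

section Graph

variable {R A B M : Type*} [CommRing R] [Ring A] [Algebra R A] [Ring B] [Algebra R B]
  [AddCommGroup M] [Module R M]

theorem le_comap_list_prod_of_filtration {V : ℕ → Submodule R M} {l : List (Module.End R M)}
    (hl : ∀ f ∈ l, ∀ k, V (k + 1) ≤ (V k).comap f) (k : ℕ) :
    V (k + l.length) ≤ (V k).comap l.prod := by
  induction l generalizing k with
  | nil => exact fun v hv => by simpa using hv
  | cons f l ih =>
    intro v hv
    have hlv : l.prod v ∈ V (k + 1) :=
      ih (fun g hg => hl g (List.mem_cons_of_mem _ hg)) (k + 1) (by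
        rwa [List.length_cons, add_comm l.length, ← add_assoc] at hv)
    simpa using hl f List.mem_cons_self k hlv

theorem exists_algHom_of_le_map_fst {Γ : Subalgebra R (A × B)} {T : Subalgebra R A}
    (hT : T ≤ Γ.map (AlgHom.fst R A B)) (h0 : ∀ b, (0, b) ∈ Γ → b = 0) :
    ∃ φ : T →ₐ[R] B, ∀ a b, (↑a, b) ∈ Γ ↔ φ a = b := by
  have hinj : Function.Injective ((AlgHom.fst R A B).comp Γ.val) := by
    rw [injective_iff_map_eq_zero]
    rintro ⟨⟨a, b⟩, hab⟩ (rfl : a = 0)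
    exact Subtype.ext (Prod.ext rfl (h0 b hab))
  have hle : T ≤ ((AlgHom.fst R A B).comp Γ.val).range := by
    rwa [AlgHom.range_comp, Subalgebra.range_val]
  let e := AlgEquiv.ofInjective _ hinj
  let ψ : T →ₐ[R] Γ := e.symm.toAlgHom.comp (Subalgebra.inclusion hle)
  have hψ (a : T) : (ψ a : A × B).1 = a :=
    congrArg Subtype.val (e.apply_symm_apply (Subalgebra.inclusion hle a))
  refine ⟨(AlgHom.snd R A B).comp (Γ.val.comp ψ), fun a b => ⟨fun hab => ?_, ?_⟩⟩
  · have : ψ a = ⟨(↑a, b), hab⟩ := hinj (hψ a)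
    simp [this]
  · rintro rfl
    rw [← hψ a]
    exact (ψ a).2

end Graph

section Intertwiners

variable {R A B M ι κ : Type*} [CommRing R] [Ring A] [Algebra R A] [Ring B] [Algebra R B]
  [AddCommGroup M] [Module R M]

/-- The submodule obtained from `W` by adjoining the vectors `v k i`. -/
def adjoinVec (W : Submodule R M) (v : κ → ι → M) : Submodule R M :=
  W ⊔ Submodule.span R (Set.range (Function.uncurry v))

theorem le_adjoinVec (W : Submodule R M) (v : κ → ι → M) : W ≤ adjoinVec W v := le_sup_left

theorem mem_adjoinVec (W : Submodule R M) (v : κ → ι → M) (k : κ) (i : ι) :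
    v k i ∈ adjoinVec W v :=
  Submodule.mem_sup_right (Submodule.subset_span ⟨(k, i), rfl⟩)

theorem adjoinVec_le {W V : Submodule R M} {v : κ → ι → M} (hW : W ≤ V) (hv : ∀ k i, v k i ∈ V) :
    adjoinVec W v ≤ V :=
  sup_le hW (Submodule.span_le.mpr (Set.range_subset_iff.mpr fun q => hv q.1 q.2))

variable [Fintype ι] [DecidableEq ι]

/-- The pairs `(a, b)` such that `a` preserves `W` and, modulo `W`, acts on each of the families
`v k` by the matrix of `b`. -/
def intertwiners (α : A →ₐ[R] Module.End R M) (π : B →ₐ[R] Matrix ι ι R)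
    (W : Submodule R M) (v : κ → ι → M) : Subalgebra R (A × B) where
  carrier := {p | W ≤ W.comap (α p.1) ∧ ∀ k j, α p.1 (v k j) - ∑ i, π p.2 i j • v k i ∈ W}
  mul_mem' := by
    rintro ⟨a, b⟩ ⟨a', b'⟩ ⟨ha, hab⟩ ⟨ha', hab'⟩
    refine ⟨fun w hw => by simpa using ha (ha' hw), fun k j => ?_⟩
    have h₁ : α a (α a' (v k j) - ∑ i, π b' i j • v k i) ∈ W := ha (hab' k j)
    have h₂ : ∑ i, π b' i j • (α a (v k i) - ∑ l, π b l i • v k l) ∈ W :=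
      W.sum_mem fun i _ => W.smul_mem _ (hab k i)
    have hmul : ∑ l, (π b * π b') l j • v k l = ∑ i, π b' i j • ∑ l, π b l i • v k l := by
      simp_rw [Matrix.mul_apply, Finset.sum_smul, Finset.smul_sum, smul_smul]
      rw [Finset.sum_comm]
      simp_rw [mul_comm]
    simpa [hmul, smul_sub] using W.add_mem h₁ h₂
  add_mem' := by
    rintro ⟨a, b⟩ ⟨a', b'⟩ ⟨ha, hab⟩ ⟨ha', hab'⟩
    refine ⟨fun w hw => ?_, fun k j => ?_⟩
    · have h : α a w ∈ W := ha hw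
      simpa using W.add_mem h (ha' hw)
    · simpa [add_smul, Finset.sum_add_distrib, add_sub_add_comm]
        using W.add_mem (hab k j) (hab' k j)
  algebraMap_mem' r := by
    refine ⟨fun w hw => by simpa using W.smul_mem r hw, fun k j => ?_⟩
    simp [Matrix.algebraMap_matrix_apply, ite_smul]

variable {α : A →ₐ[R] Module.End R M} {π : B →ₐ[R] Matrix ι ι R} {W : Submodule R M}
  {v : κ → ι → M}

theorem adjoinVec_le_comap_of_mem_intertwiners {p : A × B} (hp : p ∈ intertwiners α π W v) :
    adjoinVec W v ≤ (adjoinVec W v).comap (α p.1) := by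
  refine adjoinVec_le (hp.1.trans (Submodule.comap_mono (le_adjoinVec W v))) fun k j => ?_
  have hsum : ∑ i, π p.2 i j • v k i ∈ adjoinVec W v :=
    sum_mem fun i _ => Submodule.smul_mem _ _ (mem_adjoinVec W v k i)
  simpa using add_mem (le_adjoinVec W v (hp.2 k j)) hsum

theorem adjoinVec_le_comap_of_mk_zero_mem_intertwiners {a : A}
    (ha : (a, 0) ∈ intertwiners α π W v) : adjoinVec W v ≤ W.comap (α a) :=
  adjoinVec_le ha.1 fun k j => by simpa using ha.2 k j

end Intertwiners

section Net

variable {G : Type} [Group G]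

theorem XG.existsUnique_coords {i j : Fin 3} (hij : i ≠ j) (g h : G) :
    ∃! y : XG G, y.1 i = g ∧ y.1 j = h := by
  wlog hlt : i < j generalizing i j g h
  · simpa only [and_comm] using this hij.symm h g (hij.lt_or_gt.resolve_left hlt)
  have h01 (g h : G) : ∃! y : XG G, y.1 0 = g ∧ y.1 1 = h := by
    refine ⟨⟨![g, h, g * h], rfl⟩, ⟨rfl, rfl⟩, ?_⟩
    rintro ⟨y, hy⟩ ⟨rfl, rfl⟩
    ext k
    fin_cases k <;> simp [← hy]
  obtain ⟨rfl, rfl⟩ | ⟨rfl, rfl⟩ | ⟨rfl, rfl⟩ :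
      (i = 0 ∧ j = 1) ∨ (i = 0 ∧ j = 2) ∨ (i = 1 ∧ j = 2) := by lia
  · exact h01 g h
  · refine (existsUnique_congr fun y => ?_).mp (h01 g (g⁻¹ * h))
    rw [← y.2, eq_inv_mul_iff_mul_eq]
    exact and_congr_right fun hy => by rw [hy]
  · refine (existsUnique_congr fun y => ?_).mp (h01 (h * g⁻¹) g)
    rw [← y.2, eq_mul_inv_iff_mul_eq, and_comm]
    exact and_congr_right fun hy => by rw [hy]

/-- The `k`-th coordinate of `y` normalized so that the base point `x` has coordinates `1`. -/
def coord (x : XG G) (k : Fin 3) (y : XG G) : G := (x.1 k)⁻¹ * y.1 k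

variable (x : XG G)

@[simp]
theorem coord_self (k : Fin 3) : coord x k x = 1 := inv_mul_cancel _

theorem coord_eq_coord_iff {k : Fin 3} {y z : XG G} :
    coord x k y = coord x k z ↔ y.1 k = z.1 k := mul_right_inj _

theorem existsUnique_coord {i j : Fin 3} (hij : i ≠ j) (g h : G) :
    ∃! y, coord x i y = g ∧ coord x j y = h := by
  simpa only [coord, inv_mul_eq_iff_eq_mul] using XG.existsUnique_coords hij _ _

theorem inv_eq_self_of_sq_eq_one {a : G} (ha : a ^ 2 = 1) : a⁻¹ = a :=
  inv_eq_of_mul_eq_one_left (by rw [← sq, ha])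

theorem coord_mul_coord (hG : ∀ a : G, a ^ 2 = 1) (y : XG G) :
    coord x 0 y * coord x 1 y = coord x 2 y := by
  have hcomm (a b : G) : a * b = b * a := by
    rw [← inv_eq_self_of_sq_eq_one (hG (a * b)), _root_.mul_inv_rev,
      inv_eq_self_of_sq_eq_one (hG a), inv_eq_self_of_sq_eq_one (hG b)]
  rw [coord, coord, coord, ← x.2, ← y.2, Commute.mul_mul_mul_comm (hcomm _ _),
    ← Commute.mul_inv (hcomm _ _)]

theorem coord_eq_one_iff (hG : ∀ a : G, a ^ 2 = 1) {i j k : Fin 3} (hij : i ≠ j) (hik : i ≠ k)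
    (hjk : j ≠ k) (y : XG G) : coord x i y = 1 ↔ coord x j y = coord x k y := by
  have h012 := coord_mul_coord x hG y
  have h0 : coord x 0 y = 1 ↔ coord x 1 y = coord x 2 y := by
    rw [← h012, right_eq_mul]
  have h1 : coord x 1 y = 1 ↔ coord x 0 y = coord x 2 y := by
    rw [← h012, left_eq_mul]
  have h2 : coord x 2 y = 1 ↔ coord x 0 y = coord x 1 y := by
    rw [← h012, mul_eq_one_iff_eq_inv, inv_eq_self_of_sq_eq_one (hG _)]
  wlog hlt : j < k generalizing j k
  · exact (this hik hij hjk.symm (hjk.lt_or_gt.resolve_left hlt)).trans eq_comm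
  obtain ⟨rfl, rfl, rfl⟩ | ⟨rfl, rfl, rfl⟩ | ⟨rfl, rfl, rfl⟩ :
      (i = 0 ∧ j = 1 ∧ k = 2) ∨ (i = 1 ∧ j = 0 ∧ k = 2) ∨ (i = 2 ∧ j = 0 ∧ k = 1) := by lia
  exacts [h0, h1, h2]

end Net

section Rel

variable {G : Type} [Group G] {y z : XG G}

theorem rel_zero_iff : rel 0 y z ↔ y = z := Iff.rfl

theorem rel_castSucc_succ_iff {i : Fin 3} :
    rel i.castSucc.succ y z ↔ y ≠ z ∧ y.1 i = z.1 i := by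
  fin_cases i <;> rfl

theorem rel_four_iff : rel 4 y z ↔ ∀ i, y.1 i ≠ z.1 i := Iff.rfl

theorem existsUnique_rel (y z : XG G) : ∃! a, rel a y z := by
  by_cases hyz : y = z
  · refine ⟨0, hyz, Fin.cases (fun _ => rfl) (Fin.lastCases (fun h => ?_) fun i h => ?_)⟩
    · exact absurd (congrFun (congrArg Subtype.val hyz) 0) (h 0)
    · exact absurd hyz (rel_castSucc_succ_iff.mp h).1
  by_cases h4 : ∀ i, y.1 i ≠ z.1 i
  · refine ⟨4, h4, Fin.cases (absurd · hyz) (Fin.lastCases (fun _ => rfl) fun i h => ?_)⟩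
    exact absurd (rel_castSucc_succ_iff.mp h).2 (h4 i)
  obtain ⟨i, hi⟩ := by simpa only [not_forall, not_not] using h4
  refine ⟨i.castSucc.succ, rel_castSucc_succ_iff.mpr ⟨hyz, hi⟩,
    Fin.cases (absurd · hyz) (Fin.lastCases (absurd · h4) fun j h => ?_)⟩
  by_contra hne
  have hji : j ≠ i := fun h => hne (by rw [h])
  exact hyz ((XG.existsUnique_coords hji _ _).unique ⟨(rel_castSucc_succ_iff.mp h).2, hi⟩
    ⟨rfl, rfl⟩)

end Rel

section Vectors

variable (F : Type) [Field F] {G : Type} [Group G] [DecidableEq G] (x : XG G)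

/-- The indicator vector of the set of points `R_a`-related to the base point `x`. -/
def classVec (a : Fin 5) : XG G → F := fun y => if rel a x y then 1 else 0

/-- The indicator vector of the line `{y | coord x k y = g}` of the `k`-th parallel class. -/
def lineVec (k : Fin 3) (g : G) : XG G → F := fun y => if coord x k y = g then 1 else 0

theorem classVec_apply_of_rel {a : Fin 5} {y : XG G} (h : rel a x y) (b : Fin 5) :
    classVec F x b y = if b = a then 1 else 0 := by
  have hab : rel b x y ↔ b = a := ⟨((existsUnique_rel x y).unique · h), fun hb => hb ▸ h⟩
  simp only [classVec, hab]

theorem classVec_mul_classVec (a b : Fin 5) :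
    classVec F x a * classVec F x b = if a = b then classVec F x a else 0 := by
  ext y
  obtain ⟨c, hc, -⟩ := existsUnique_rel x y
  rw [Pi.mul_apply, apply_ite (fun v : XG G → F => v y)]
  simp only [classVec_apply_of_rel F x hc, Pi.zero_apply]
  grind

theorem sum_classVec : ∑ a, classVec F x a = 1 := by
  ext y
  obtain ⟨a, ha, -⟩ := existsUnique_rel x y
  simp [classVec_apply_of_rel F x ha]

theorem classVec_zero : classVec F x 0 = Pi.single x 1 := by
  ext y
  simp [classVec, rel_zero_iff, Pi.single_apply, eq_comm]

theorem lineVec_one (k : Fin 3) :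
    lineVec F x k 1 = classVec F x 0 + classVec F x k.castSucc.succ := by
  ext y
  have hcoord : coord x k y = 1 ↔ x.1 k = y.1 k := by
    rw [← coord_self x k, coord_eq_coord_iff, eq_comm]
  by_cases hxy : x = y
  · subst hxy; simp [lineVec, classVec, rel_zero_iff, rel_castSucc_succ_iff]
  · simp [lineVec, classVec, rel_zero_iff, rel_castSucc_succ_iff, hxy, hcoord]

theorem classVec_mul_lineVec {k : Fin 3} {h : G} (hh : h ≠ 1) (j : Fin 3) :
    classVec F x j.castSucc.succ * lineVec F x k h = lineVec F x j 1 * lineVec F x k h := by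
  ext y
  have hx : coord x k y = h → x ≠ y := by rintro rfl rfl; exact hh (coord_self x k)
  have hclass : x ≠ y → (rel j.castSucc.succ x y ↔ coord x j y = 1) := by
    rw [rel_castSucc_succ_iff, ← coord_self x j, coord_eq_coord_iff]
    grind
  simp only [Pi.mul_apply, classVec, lineVec]
  grind

theorem lineVec_mul_lineVec_self (k : Fin 3) (g h : G) :
    lineVec F x k g * lineVec F x k h = if g = h then lineVec F x k g else 0 := by
  ext y
  split_ifs with hgh
  · simp [lineVec, hgh]
  · simp only [lineVec, Pi.mul_apply, Pi.zero_apply]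
    grind

theorem lineVec_mul_lineVec {j k : Fin 3} (hjk : j ≠ k) (y : XG G) :
    lineVec F x j (coord x j y) * lineVec F x k (coord x k y) = Pi.single y 1 := by
  ext z
  have hz : coord x j z = coord x j y ∧ coord x k z = coord x k y ↔ z = y :=
    ⟨fun h => (existsUnique_coord x hjk _ _).unique h ⟨rfl, rfl⟩, by rintro rfl; exact ⟨rfl, rfl⟩⟩
  simp [lineVec, Pi.single_apply, ← hz, ite_and, -mul_ite, ite_mul]

theorem classVec_four_mul (v : XG G → F) :
    classVec F x 4 * v =
      v - classVec F x 0 * v - ∑ i : Fin 3, classVec F x i.castSucc.succ * v := by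
  have h : (Fin.last 3).succ = 4 := rfl
  have hsum : (∑ a, classVec F x a) * v = v := by rw [sum_classVec, one_mul]
  rw [Fin.sum_univ_succ, Fin.sum_univ_castSucc, h, add_mul, add_mul, Finset.sum_mul] at hsum
  rw [sub_sub, eq_sub_iff_add_eq', add_assoc, hsum]

/-- The classes `R_1, …, R_4` off the line `coord x i = 1`, as a `0`-`1` vector. -/
def offLine (i : Fin 3) : Fin 4 → F :=
  fun j => if j = i.castSucc then 0 else 1

theorem one_sub_lineVec_one (i : Fin 3) :
    1 - lineVec F x i 1 = ∑ j, offLine F i j • classVec F x j.succ := by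
  rw [← sum_classVec F x, Fin.sum_univ_succ, lineVec_one]
  have h (j : Fin 4) : offLine F i j • classVec F x j.succ =
      classVec F x j.succ - if j = i.castSucc then classVec F x i.castSucc.succ else 0 := by
    by_cases hj : j = i.castSucc <;> simp [offLine, hj]
  simp [h]

theorem classVec_mul_lineVec_self {h : G} (hh : h ≠ 1) (k : Fin 3) :
    classVec F x k.castSucc.succ * lineVec F x k h = 0 := by
  rw [classVec_mul_lineVec F x hh, lineVec_mul_lineVec_self, if_neg hh.symm]

theorem classVec_zero_mul_lineVec {h : G} (hh : h ≠ 1) (k : Fin 3) :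
    classVec F x 0 * lineVec F x k h = 0 := by
  rw [classVec_zero, ← Pi.single_mul_left, one_mul]
  simp [lineVec, hh.symm]

theorem classVec_four_mul_lineVec {h : G} (hh : h ≠ 1) {i j k : Fin 3} (hij : i ≠ j) (hik : i ≠ k)
    (hjk : j ≠ k) :
    classVec F x 4 * lineVec F x k h = lineVec F x k h -
      classVec F x i.castSucc.succ * lineVec F x k h -
      classVec F x j.castSucc.succ * lineVec F x k h := by
  have huniv : (Finset.univ : Finset (Fin 3)) = {i, j, k} := by
    ext l
    simp only [Finset.mem_univ, Finset.mem_insert, Finset.mem_singleton]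
    lia
  rw [classVec_four_mul, classVec_zero_mul_lineVec F x hh, huniv,
    Finset.sum_insert (by simp [hij, hik]), Finset.sum_pair hjk, classVec_mul_lineVec_self F x hh]
  abel

-- On the line `coord x j = 1` the two other coordinates agree, because `G` has exponent `2`; so the
-- lines with parameter `h` in the two other directions meet this line in the same point `y`.
theorem exists_classVec_mul_lineVec_eq_single (hG : ∀ a : G, a ^ 2 = 1) {h : G} (hh : h ≠ 1)
    (j : Fin 3) :
    ∃ y, coord x j y = 1 ∧ ∀ k ≠ j, coord x k y = h ∧
      classVec F x j.castSucc.succ * lineVec F x k h = Pi.single y 1 := by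
  obtain ⟨l, hl⟩ := exists_ne j
  obtain ⟨y, ⟨hy, hyl⟩, -⟩ := existsUnique_coord x hl.symm 1 h
  have hyk (k : Fin 3) (hk : k ≠ j) : coord x k y = h := by
    by_cases hkl : k = l
    · rwa [hkl]
    · rw [← hyl, ← coord_eq_one_iff x hG hk.symm hl.symm hkl, hy]
  refine ⟨y, hy, fun k hk => ⟨hyk k hk, ?_⟩⟩
  have h1 := lineVec_mul_lineVec F x hk.symm y
  rwa [hy, hyk k hk, ← classVec_mul_lineVec F x hh] at h1

variable [Fintype G]

theorem sum_lineVec (k : Fin 3) : ∑ g, lineVec F x k g = 1 := by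
  ext y
  simp [lineVec]

theorem lineVec_dotProduct_lineVec {j k : Fin 3} (hjk : j ≠ k) (g h : G) :
    lineVec F x j g ⬝ᵥ lineVec F x k h = 1 := by
  obtain ⟨y, ⟨rfl, rfl⟩, -⟩ := existsUnique_coord x hjk g h
  simp_rw [dotProduct, ← Pi.mul_apply, lineVec_mul_lineVec F x hjk]
  exact Fintype.sum_pi_single' y 1

theorem one_dotProduct_lineVec (k : Fin 3) (g : G) :
    1 ⬝ᵥ lineVec F x k g = Fintype.card G := by
  obtain ⟨j, hjk⟩ := exists_ne k
  rw [← sum_lineVec F x j, sum_dotProduct]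
  simp [lineVec_dotProduct_lineVec F x hjk]

theorem lineVec_dotProduct_lineVec_self (k : Fin 3) (g h : G) :
    lineVec F x k g ⬝ᵥ lineVec F x k h = if g = h then (Fintype.card G : F) else 0 := by
  rw [← one_dotProduct_lineVec F x k g]
  simp_rw [dotProduct, ← Pi.mul_apply, lineVec_mul_lineVec_self]
  split_ifs <;> simp

end Vectors

section Matrices

variable (F : Type) [Field F] {G : Type} [Group G] [DecidableEq G]

/-- The adjacency matrix of the relation of having the same `i`-th coordinate. -/
def sameCoord (i : Fin 3) : Matrix (XG G) (XG G) F :=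
  Matrix.of fun y z => if y.1 i = z.1 i then 1 else 0

theorem dualE_eq_diagonal (x : XG G) (a : Fin 5) : DualE F x a = diagonal (classVec F x a) := by
  ext y z
  simp [DualE, diagonal_apply, classVec, ite_and]

theorem adj_zero : Adj F 0 = (1 : Matrix (XG G) (XG G) F) := by
  ext y z
  simp [Adj, rel_zero_iff, one_apply]

theorem adj_castSucc_succ (i : Fin 3) :
    Adj F i.castSucc.succ = (sameCoord F i - 1 : Matrix (XG G) (XG G) F) := by
  ext y z
  by_cases hyz : y = z <;> simp [Adj, sameCoord, rel_castSucc_succ_iff, one_apply, hyz]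

theorem sum_adj : ∑ a, Adj F a = AllOne F G := by
  ext y z
  have h := congrFun (sum_classVec F y) z
  rw [Finset.sum_apply] at h
  rwa [Matrix.sum_apply]

variable [Fintype G]

theorem terwilligerAlg_le (x : XG G) {S : Subalgebra F (Matrix (XG G) (XG G) F)}
    (hE : ∀ a, DualE F x a ∈ S) (hB : ∀ i, sameCoord F i ∈ S) (hJ : AllOne F G ∈ S) :
    TerwilligerAlg F G x ≤ S := by
  have h0 : Adj F 0 ∈ S := by simpa only [adj_zero] using S.one_mem
  have h3 (i : Fin 3) : Adj F i.castSucc.succ ∈ S := by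
    simpa only [adj_castSucc_succ] using S.sub_mem (hB i) S.one_mem
  have h4 : Adj F 4 ∈ S := by
    have hsum : AllOne F G = Adj F 0 + ∑ i : Fin 3, Adj F i.castSucc.succ + Adj F 4 := by
      rw [← sum_adj, Fin.sum_univ_succ, Fin.sum_univ_castSucc, add_assoc]
      rfl
    rw [eq_sub_of_add_eq' hsum.symm]
    exact S.sub_mem hJ (S.add_mem h0 (S.sum_mem fun i _ => h3 i))
  have hA : ∀ b, Adj F b ∈ S := Fin.cases h0 (Fin.lastCases h4 h3)
  refine Algebra.adjoin_le ?_
  rintro _ ⟨a, b, c, rfl⟩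
  exact S.mul_mem (S.mul_mem (hE a) (hA b)) (hE c)

theorem dualE_mem_terwilligerAlg (x : XG G) (a : Fin 5) :
    DualE F x a ∈ TerwilligerAlg F G x := by
  refine Algebra.subset_adjoin ⟨a, 0, a, ?_⟩
  simp [adj_zero, dualE_eq_diagonal, ← Pi.mul_def, classVec_mul_classVec]

theorem dualE_mul_sameCoord_mul_dualE_mem_terwilligerAlg (x : XG G) (a c : Fin 5) (i : Fin 3) :
    DualE F x a * sameCoord F i * DualE F x c ∈ TerwilligerAlg F G x := by
  have h : DualE F x a * Adj F i.castSucc.succ * DualE F x c ∈ TerwilligerAlg F G x :=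
    Algebra.subset_adjoin ⟨a, _, c, rfl⟩
  have h' : DualE F x a * DualE F x c ∈ TerwilligerAlg F G x :=
    mul_mem (dualE_mem_terwilligerAlg F x a) (dualE_mem_terwilligerAlg F x c)
  simpa [adj_castSucc_succ, mul_sub, sub_mul] using add_mem h h'

variable (x : XG G) {F}

theorem sameCoord_mulVec_apply (i : Fin 3) (v : XG G → F) (y : XG G) :
    (sameCoord F i *ᵥ v) y = lineVec F x i (coord x i y) ⬝ᵥ v := by
  simp [mulVec, dotProduct, sameCoord, lineVec, coord_eq_coord_iff, eq_comm]

theorem allOne_mulVec (v : XG G → F) : AllOne F G *ᵥ v = fun _ => 1 ⬝ᵥ v := rfl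

variable (F)

theorem sameCoord_mulVec_single (i : Fin 3) (y : XG G) :
    sameCoord F i *ᵥ Pi.single y 1 = lineVec F x i (coord x i y) := by
  ext z
  simp [sameCoord, lineVec, coord_eq_coord_iff]

theorem sameCoord_mulVec_classVec_mul_lineVec (hG : ∀ a : G, a ^ 2 = 1) {h : G} (hh : h ≠ 1)
    {j k : Fin 3} (hjk : j ≠ k) (i : Fin 3) :
    sameCoord F i *ᵥ (classVec F x j.castSucc.succ * lineVec F x k h) =
      if i = j then lineVec F x i 1 else lineVec F x i h := by
  obtain ⟨y, hj, hy⟩ := exists_classVec_mul_lineVec_eq_single F x hG hh j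
  rw [(hy k hjk.symm).2, sameCoord_mulVec_single F x]
  split_ifs with hij
  · rw [hij, hj]
  · rw [(hy i hij).1]

theorem allOne_mulVec_single (y : XG G) : AllOne F G *ᵥ Pi.single y 1 = 1 := by
  ext z
  simp [AllOne]

end Matrices

section UnitOrder

variable {F : Type} [Field F] {G : Type} [Group G] [Fintype G] [DecidableEq G]
  (hn : (Fintype.card G : F) = 1) (x : XG G)

/-- The scalars `c j` such that `sameCoord F i` maps `classVec F x j.succ` to
`c j • (1 - lineVec F x i 1)` when `|G| = 1` in `F`. -/
def offLineCoeff (F : Type) [Field F] (i : Fin 3) : Fin 4 → F :=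
  fun j => if j = i.castSucc then 0 else if j = 3 then -1 else 1

theorem offLineCoeff_three (i : Fin 3) : offLineCoeff F i 3 = -1 := by
  simp [offLineCoeff, show 3 ≠ i.castSucc from (Fin.castSucc_lt_last i).ne']

theorem offLineCoeff_castSucc (i j : Fin 3) :
    offLineCoeff F i j.castSucc = if i = j then 0 else 1 := by
  simp [offLineCoeff, show j.castSucc ≠ 3 from (Fin.castSucc_lt_last j).ne, eq_comm]

include hn

theorem sameCoord_mulVec_lineVec (i j : Fin 3) (g : G) :
    sameCoord F i *ᵥ lineVec F x j g = if i = j then lineVec F x i g else 1 := by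
  ext y
  rw [sameCoord_mulVec_apply x]
  split_ifs with hij
  · simp [← hij, lineVec_dotProduct_lineVec_self, hn, lineVec]
  · simp [lineVec_dotProduct_lineVec F x hij]

theorem sameCoord_mulVec_one (i : Fin 3) :
    sameCoord F i *ᵥ (1 : XG G → F) = 1 := by
  obtain ⟨x⟩ : Nonempty (XG G) := ⟨⟨1, one_mul 1⟩⟩
  ext y
  simp [sameCoord_mulVec_apply x, dotProduct_comm _ (1 : XG G → F), one_dotProduct_lineVec, hn]

theorem allOne_mulVec_lineVec (k : Fin 3) (g : G) :
    AllOne F G *ᵥ lineVec F x k g = 1 := by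
  ext y
  simp [allOne_mulVec, one_dotProduct_lineVec, hn]

theorem allOne_mulVec_one : AllOne F G *ᵥ (1 : XG G → F) = 1 := by
  obtain ⟨x⟩ : Nonempty (XG G) := ⟨⟨1, one_mul 1⟩⟩
  conv_lhs => rw [← sum_lineVec F x 0, mulVec_sum]
  ext y
  simp [allOne_mulVec_lineVec hn, hn]

theorem sameCoord_mulVec_classVec_castSucc_succ (i j : Fin 3) :
    sameCoord F i *ᵥ classVec F x j.castSucc.succ =
      if i = j then 0 else 1 - lineVec F x i 1 := by
  have hj : classVec F x j.castSucc.succ = lineVec F x j 1 - Pi.single x 1 := by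
    rw [lineVec_one, classVec_zero, add_sub_cancel_left]
  rw [hj, mulVec_sub, sameCoord_mulVec_lineVec hn, sameCoord_mulVec_single F x, coord_self]
  split_ifs <;> simp

theorem sameCoord_mulVec_classVec_four (i : Fin 3) :
    sameCoord F i *ᵥ classVec F x 4 = -(1 - lineVec F x i 1) := by
  rw [← mul_one (classVec F x 4), classVec_four_mul, mulVec_sub, mulVec_sub, mulVec_sum]
  simp_rw [mul_one, sameCoord_mulVec_classVec_castSucc_succ hn, sameCoord_mulVec_one hn,
    classVec_zero, sameCoord_mulVec_single F x, coord_self]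
  fin_cases i <;> simp [Fin.sum_univ_three]

theorem sameCoord_mulVec_classVec_succ (i : Fin 3) (j : Fin 4) :
    sameCoord F i *ᵥ classVec F x j.succ = offLineCoeff F i j • (1 - lineVec F x i 1) := by
  induction j using Fin.lastCases with
  | last =>
    change sameCoord F i *ᵥ classVec F x 4 = offLineCoeff F i 3 • _
    rw [sameCoord_mulVec_classVec_four hn, offLineCoeff_three, neg_one_smul]
  | cast j =>
    rw [sameCoord_mulVec_classVec_castSucc_succ hn, offLineCoeff_castSucc]
    split_ifs <;> simp

theorem allOne_mulVec_classVec_succ (j : Fin 4) : AllOne F G *ᵥ classVec F x j.succ = 0 := by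
  have h3 (i : Fin 3) : AllOne F G *ᵥ classVec F x i.castSucc.succ = 0 := by
    rw [← add_sub_cancel_left (classVec F x 0) (classVec F x i.castSucc.succ), ← lineVec_one,
      mulVec_sub, allOne_mulVec_lineVec hn, classVec_zero, allOne_mulVec_single, sub_self]
  induction j using Fin.lastCases with
  | last =>
    change AllOne F G *ᵥ classVec F x 4 = 0
    rw [← mul_one (classVec F x 4), classVec_four_mul, mulVec_sub, mulVec_sub, mulVec_sum]
    simp_rw [mul_one, h3, classVec_zero, allOne_mulVec_single, allOne_mulVec_one hn]
    simp
  | cast i => exact h3 i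

variable (hG : ∀ a : G, a ^ 2 = 1) {h : G} (hh : h ≠ 1)
include hG hh

theorem sameCoord_mulVec_classVec_four_mul_lineVec (i k : Fin 3) :
    sameCoord F i *ᵥ (classVec F x 4 * lineVec F x k h) =
      if i = k then -lineVec F x i h else 1 - lineVec F x i 1 - lineVec F x i h := by
  obtain ⟨l, m, hlm, hlk, hmk, hi⟩ : ∃ l m, l ≠ m ∧ l ≠ k ∧ m ≠ k ∧ (i = l ∨ i = k) := by
    decide +revert
  rw [classVec_four_mul_lineVec F x hh hlm hlk hmk, mulVec_sub, mulVec_sub,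
    sameCoord_mulVec_lineVec hn, sameCoord_mulVec_classVec_mul_lineVec F x hG hh hlk,
    sameCoord_mulVec_classVec_mul_lineVec F x hG hh hmk]
  obtain rfl | rfl := hi
  · simp [hlm, hlk]
  · simp [hlk.symm, hmk.symm]

theorem allOne_mulVec_classVec_four_mul_lineVec (k : Fin 3) :
    AllOne F G *ᵥ (classVec F x 4 * lineVec F x k h) = -1 := by
  obtain ⟨i, j, hij, hik, hjk⟩ : ∃ i j, i ≠ j ∧ i ≠ k ∧ j ≠ k := by decide +revert
  have hsingle {l : Fin 3} (hlk : l ≠ k) :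
      AllOne F G *ᵥ (classVec F x l.castSucc.succ * lineVec F x k h) = 1 := by
    obtain ⟨y, -, hy⟩ := exists_classVec_mul_lineVec_eq_single F x hG hh l
    rw [(hy k hlk.symm).2, allOne_mulVec_single]
  rw [classVec_four_mul_lineVec F x hh hij hik hjk, mulVec_sub, mulVec_sub,
    allOne_mulVec_lineVec hn, hsingle hik, hsingle hjk]
  simp

end UnitOrder

section Flag

variable (F : Type) [Field F] {G : Type} [Group G] [DecidableEq G] (x : XG G)

/-- A direction different from `j` for each `j < 3`; the value at `j = 3` is arbitrary. -/
def otherDir : Fin 4 → Fin 3 := ![1, 0, 0, 0]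

theorem otherDir_castSucc_ne (j : Fin 3) : otherDir j.castSucc ≠ j := by decide +revert

/-- The part in the class `R_{j+1}` of the line with direction `otherDir j` and parameter `h`. -/
def cellVec (h : {h : G // h ≠ 1}) (j : Fin 4) : XG G → F :=
  classVec F x j.succ * lineVec F x (otherDir j) h

/-- The difference of the parts in `R_4` of two lines with the same parameter. -/
def diffVec : {h : G // h ≠ 1} × Fin 3 × Fin 3 → XG G → F :=
  fun q => classVec F x 4 * (lineVec F x q.2.1 q.1 - lineVec F x q.2.2 q.1)

/-- The first term of the flag of `T`-invariant subspaces: it carries the representation of `T`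
on the span of the classes `R_1, …, R_4`. -/
def classSpan : Submodule F (XG G → F) :=
  adjoinVec ⊥ fun _ : Unit => classVec F x ∘ Fin.succ

/-- The second term of the flag, with `1`-dimensional quotient spanned by the base point. -/
def centerSpan : Submodule F (XG G → F) :=
  adjoinVec (classSpan F x) fun _ _ : Unit => Pi.single x 1

/-- The third term of the flag, with trivial action of everything but `DualE F x 4` on the
quotient. -/
def diffSpan : Submodule F (XG G → F) :=
  adjoinVec (centerSpan F x) fun q (_ : Unit) => diffVec F x q

/-- The fourth term of the flag, whose quotient is a sum of copies of `classSpan`. -/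
def cellSpan : Submodule F (XG G → F) :=
  adjoinVec (diffSpan F x) (cellVec F x)

theorem classSpan_le_centerSpan : classSpan F x ≤ centerSpan F x := le_adjoinVec _ _

theorem centerSpan_le_diffSpan : centerSpan F x ≤ diffSpan F x := le_adjoinVec _ _

theorem diffSpan_le_cellSpan : diffSpan F x ≤ cellSpan F x := le_adjoinVec _ _

theorem classVec_succ_mem_classSpan (j : Fin 4) : classVec F x j.succ ∈ classSpan F x :=
  mem_adjoinVec _ (fun _ : Unit => classVec F x ∘ Fin.succ) () j

theorem single_mem_centerSpan : Pi.single x 1 ∈ centerSpan F x :=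
  mem_adjoinVec _ (fun _ _ : Unit => Pi.single x 1) () ()

theorem diffVec_mem_diffSpan (q : {h : G // h ≠ 1} × Fin 3 × Fin 3) :
    diffVec F x q ∈ diffSpan F x :=
  mem_adjoinVec _ (fun q (_ : Unit) => diffVec F x q) q ()

theorem cellVec_mem_cellSpan (h : {h : G // h ≠ 1}) (j : Fin 4) :
    cellVec F x h j ∈ cellSpan F x :=
  mem_adjoinVec _ (cellVec F x) h j

theorem one_sub_lineVec_one_mem_classSpan (i : Fin 3) : 1 - lineVec F x i 1 ∈ classSpan F x := by
  rw [one_sub_lineVec_one]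
  exact sum_mem fun j _ => Submodule.smul_mem _ _ (classVec_succ_mem_classSpan F x j)

theorem lineVec_one_mem_centerSpan (i : Fin 3) : lineVec F x i 1 ∈ centerSpan F x := by
  rw [lineVec_one, classVec_zero]
  exact add_mem (single_mem_centerSpan F x)
    (classSpan_le_centerSpan F x (classVec_succ_mem_classSpan F x i.castSucc))

theorem one_mem_centerSpan : 1 ∈ centerSpan F x := by
  simpa using add_mem (classSpan_le_centerSpan F x (one_sub_lineVec_one_mem_classSpan F x 0))
    (lineVec_one_mem_centerSpan F x 0)

theorem one_sub_single_mem_classSpan : 1 - Pi.single x 1 ∈ classSpan F x := by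
  rw [← sum_classVec F x, Fin.sum_univ_succ, classVec_zero, add_sub_cancel_left]
  exact sum_mem fun j _ => classVec_succ_mem_classSpan F x j

theorem adjoinVec_cellSpan_eq_top [Finite G] :
    adjoinVec (cellSpan F x) (fun y (_ : Unit) => Pi.single y 1) = ⊤ := by
  have := Fintype.ofFinite (XG G)
  refine eq_top_iff.mpr fun v _ => ?_
  rw [← Finset.univ_sum_single v]
  refine sum_mem fun y _ => ?_
  simpa [← Pi.single_smul] using Submodule.smul_mem _ (v y)
    (mem_adjoinVec (cellSpan F x) (fun y (_ : Unit) => Pi.single y (1 : F)) y ())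

theorem single_mem_cellSpan_of_not_rel_four {y : XG G} (hy : ¬ rel 4 x y) :
    Pi.single y 1 ∈ cellSpan F x := by
  obtain ⟨j, hj⟩ : ∃ j, x.1 j = y.1 j := by simpa only [rel_four_iff, not_forall, not_not] using hy
  rw [← coord_eq_coord_iff x, coord_self, eq_comm] at hj
  have hsingle := lineVec_mul_lineVec F x (otherDir_castSucc_ne j).symm y
  rw [hj] at hsingle
  by_cases hh : coord x (otherDir j.castSucc) y = 1
  · have hyx : y = x := (existsUnique_coord x (otherDir_castSucc_ne j) 1 1).unique ⟨hh, hj⟩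
      ⟨coord_self x _, coord_self x _⟩
    rw [hyx]
    exact diffSpan_le_cellSpan F x (centerSpan_le_diffSpan F x (single_mem_centerSpan F x))
  · rw [← hsingle, ← classVec_mul_lineVec F x hh]
    exact cellVec_mem_cellSpan F x ⟨_, hh⟩ j.castSucc

section OffCenter

variable (hG : ∀ a : G, a ^ 2 = 1)
include hG

theorem offLine_smul_cellVec_castSucc (h : {h : G // h ≠ 1}) (i j : Fin 3) :
    offLine F i j.castSucc • cellVec F x h j.castSucc =
      classVec F x j.castSucc.succ * lineVec F x i h := by
  obtain rfl | hji := eq_or_ne j i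
  · simp [offLine, classVec_mul_lineVec_self F x h.2]
  · obtain ⟨y, -, hy⟩ := exists_classVec_mul_lineVec_eq_single F x hG h.2 j
    rw [(hy i hji.symm).2, cellVec, (hy _ (otherDir_castSucc_ne j)).2]
    simp [offLine, hji]

theorem lineVec_sub_sum_cellVec_mem_diffSpan (h : {h : G // h ≠ 1}) (i : Fin 3) :
    lineVec F x i h - ∑ j, offLine F i j • cellVec F x h j ∈ diffSpan F x := by
  have h4 : offLine F i (Fin.last 3) • cellVec F x h (Fin.last 3) =
      classVec F x 4 * lineVec F x 0 h := by
    simp only [offLine, (Fin.castSucc_lt_last i).ne', if_false, one_smul]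
    rfl
  have heq : lineVec F x i h - ∑ j, offLine F i j • cellVec F x h j = diffVec F x (h, i, 0) := by
    rw [Fin.sum_univ_castSucc, h4, diffVec, mul_sub, classVec_four_mul F x (lineVec F x i h),
      classVec_zero_mul_lineVec F x h.2]
    simp_rw [offLine_smul_cellVec_castSucc F x hG]
    abel
  rw [heq]
  exact diffVec_mem_diffSpan F x (h, i, 0)

theorem lineVec_mem_cellSpan (i : Fin 3) (g : G) : lineVec F x i g ∈ cellSpan F x := by
  obtain rfl | hg := eq_or_ne g 1
  · exact diffSpan_le_cellSpan F x (centerSpan_le_diffSpan F x (lineVec_one_mem_centerSpan F x i))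
  · have hsub := lineVec_sub_sum_cellVec_mem_diffSpan F x hG ⟨g, hg⟩ i
    have hsum : ∑ j, offLine F i j • cellVec F x ⟨g, hg⟩ j ∈ cellSpan F x :=
      sum_mem fun j _ => Submodule.smul_mem _ _ (cellVec_mem_cellSpan F x _ j)
    simpa using add_mem (diffSpan_le_cellSpan F x hsub) hsum

end OffCenter

end Flag

section Symbol

variable (F : Type) [Field F]

/-- The algebra `M₄(F) × F × F`. The `4 × 4` block is indexed by the classes `R_1, …, R_4`, the
first scalar records the action on single points up to lower terms, and the second the diagonal
entry at the base point. -/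
abbrev SymbolAlg : Type := Matrix (Fin 4) (Fin 4) F × F × F

/-- The `4 × 4` block as a representation of `SymbolAlg F`. -/
def blockRep : SymbolAlg F →ₐ[F] Matrix (Fin 4) (Fin 4) F := AlgHom.fst F _ _

/-- The first scalar as a representation of `SymbolAlg F`. -/
def pointRep : SymbolAlg F →ₐ[F] Matrix Unit Unit F :=
  (Matrix.scalarAlgHom Unit F).comp ((AlgHom.fst F F F).comp (AlgHom.snd F _ _))

/-- The second scalar as a representation of `SymbolAlg F`. -/
def centerRep : SymbolAlg F →ₐ[F] Matrix Unit Unit F :=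
  (Matrix.scalarAlgHom Unit F).comp ((AlgHom.snd F F F).comp (AlgHom.snd F _ _))

/-- The action of matrices on column vectors. -/
def mulVecHom (n : Type) [Fintype n] [DecidableEq n] : Matrix n n F →ₐ[F] Module.End F (n → F) :=
  Matrix.toLinAlgEquiv'.toAlgHom

variable {G : Type} [Group G] [Fintype G] [DecidableEq G] (x : XG G)

/-- The pairs `(t, (ρ, e, s))` such that `t` preserves the flag `classSpan`, `centerSpan`,
`diffSpan`, `cellSpan` and acts on its successive quotients by `ρ`, `s`, `e`, `ρ`, `e`. Over `T`
this is the graph of an algebra homomorphism. -/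
def symbolGraph : Subalgebra F (Matrix (XG G) (XG G) F × SymbolAlg F) :=
  intertwiners (mulVecHom F _) (blockRep F) ⊥ (fun _ : Unit => classVec F x ∘ Fin.succ) ⊓
    (intertwiners (mulVecHom F _) (centerRep F) (classSpan F x)
      (fun _ _ : Unit => Pi.single x 1) ⊓
    (intertwiners (mulVecHom F _) (pointRep F) (centerSpan F x)
      (fun q (_ : Unit) => diffVec F x q) ⊓
    (intertwiners (mulVecHom F _) (blockRep F) (diffSpan F x) (cellVec F x) ⊓
    intertwiners (mulVecHom F _) (pointRep F) (cellSpan F x)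
      (fun y (_ : Unit) => Pi.single y 1))))

variable {F} {t : Matrix (XG G) (XG G) F} {ρ : Matrix (Fin 4) (Fin 4) F} {e s : F}

theorem mk_mem_symbolGraph_iff :
    (t, ρ, e, s) ∈ symbolGraph F x ↔
      (∀ j : Fin 4, t *ᵥ classVec F x j.succ = ∑ i, ρ i j • classVec F x i.succ) ∧
      t *ᵥ Pi.single x 1 - s • Pi.single x 1 ∈ classSpan F x ∧
      (∀ q, t *ᵥ diffVec F x q - e • diffVec F x q ∈ centerSpan F x) ∧
      (∀ h j, t *ᵥ cellVec F x h j - ∑ i, ρ i j • cellVec F x h i ∈ diffSpan F x) ∧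
      ∀ y, t *ᵥ Pi.single y 1 - e • Pi.single y 1 ∈ cellSpan F x := by
  constructor
  · rintro ⟨h₁, h₂, h₃, h₄, h₅⟩
    refine ⟨fun j => sub_eq_zero.mp ?_, ?_, fun q => ?_, h₄.2, fun y => ?_⟩
    · exact h₁.2 () j
    · simpa [centerRep, mulVecHom] using h₂.2 () ()
    · simpa [pointRep, mulVecHom] using h₃.2 q ()
    · simpa [pointRep, mulVecHom] using h₅.2 y ()
  · rintro ⟨h₁, h₂, h₃, h₄, h₅⟩
    have g₁ : (t, ρ, e, s) ∈ intertwiners (mulVecHom F _) (blockRep F) ⊥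
        (fun _ : Unit => classVec F x ∘ Fin.succ) :=
      ⟨bot_le, fun _ j => sub_eq_zero.mpr (h₁ j)⟩
    have g₂ : (t, ρ, e, s) ∈ intertwiners (mulVecHom F _) (centerRep F) (classSpan F x)
        (fun _ _ : Unit => Pi.single x 1) :=
      ⟨adjoinVec_le_comap_of_mem_intertwiners g₁, fun _ _ => by
        simpa [centerRep, mulVecHom] using h₂⟩
    have g₃ : (t, ρ, e, s) ∈ intertwiners (mulVecHom F _) (pointRep F) (centerSpan F x)
        (fun q (_ : Unit) => diffVec F x q) :=
      ⟨adjoinVec_le_comap_of_mem_intertwiners g₂, fun q _ => by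
        simpa [pointRep, mulVecHom] using h₃ q⟩
    have g₄ : (t, ρ, e, s) ∈ intertwiners (mulVecHom F _) (blockRep F) (diffSpan F x)
        (cellVec F x) :=
      ⟨adjoinVec_le_comap_of_mem_intertwiners g₃, h₄⟩
    refine ⟨g₁, g₂, g₃, g₄, adjoinVec_le_comap_of_mem_intertwiners g₄, fun y _ => ?_⟩
    simpa [pointRep, mulVecHom] using h₅ y

theorem list_prod_eq_zero_of_mk_zero_mem_symbolGraph {l : List (Matrix (XG G) (XG G) F)}
    (hl : ∀ t ∈ l, (t, 0) ∈ symbolGraph F x) (hlen : l.length = 5) : l.prod = 0 := by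
  let V : ℕ → Submodule F (XG G → F)
    | 0 => ⊥
    | 1 => classSpan F x
    | 2 => centerSpan F x
    | 3 => diffSpan F x
    | 4 => cellSpan F x
    | _ => ⊤
  have hV : ∀ f ∈ l.map (mulVecHom F _), ∀ k, V (k + 1) ≤ (V k).comap f := by
    simp only [List.mem_map, forall_exists_index, and_imp, forall_apply_eq_imp_iff₂]
    intro t ht
    obtain ⟨h₁, h₂, h₃, h₄, h₅⟩ := hl t ht
    rintro (_ | _ | _ | _ | _ | _)
    · exact adjoinVec_le_comap_of_mk_zero_mem_intertwiners h₁
    · exact adjoinVec_le_comap_of_mk_zero_mem_intertwiners h₂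
    · exact adjoinVec_le_comap_of_mk_zero_mem_intertwiners h₃
    · exact adjoinVec_le_comap_of_mk_zero_mem_intertwiners h₄
    · exact (adjoinVec_cellSpan_eq_top F x).ge.trans
        (adjoinVec_le_comap_of_mk_zero_mem_intertwiners h₅)
    · exact le_top
  have htop : ⊤ ≤ (⊥ : Submodule F (XG G → F)).comap (mulVecHom F _ l.prod) := by
    have h := le_comap_list_prod_of_filtration hV 0
    rwa [List.length_map, hlen, ← map_list_prod] at h
  refine Matrix.toLinAlgEquiv'.injective (LinearMap.ext fun v => ?_)
  simpa [mulVecHom] using htop (Submodule.mem_top (x := v))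

end Symbol

section Generators

variable (F : Type) [Field F] {G : Type} [Group G] [Fintype G] [DecidableEq G] (x : XG G)

theorem dualE_mem_symbolGraph (a : Fin 5) :
    (DualE F x a, Matrix.diagonal fun j : Fin 4 => if a = j.succ then (1 : F) else 0,
      if a = 4 then 1 else 0, if a = 0 then 1 else 0) ∈ symbolGraph F x := by
  have hmul (v : XG G → F) : DualE F x a *ᵥ v = classVec F x a * v := by
    ext y
    rw [dualE_eq_diagonal, mulVec_diagonal, Pi.mul_apply]
  have hclass (b : Fin 5) (v : XG G → F) : DualE F x a *ᵥ (classVec F x b * v) =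
      (if a = b then (1 : F) else 0) • (classVec F x b * v) := by
    rw [hmul, ← mul_assoc, classVec_mul_classVec]
    split_ifs with hab <;> simp [hab]
  have hdiag (v : Fin 4 → XG G → F) (j : Fin 4) :
      ∑ i, (Matrix.diagonal fun j : Fin 4 => if a = j.succ then (1 : F) else 0) i j • v i =
        (if a = j.succ then (1 : F) else 0) • v j := by
    simp [diagonal_apply, ite_smul]
  refine (mk_mem_symbolGraph_iff x).mpr ⟨fun j => ?_, ?_, fun q => ?_, fun h j => ?_, fun y => ?_⟩
  · simpa [hdiag fun i => classVec F x i.succ] using hclass j.succ 1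
  · have h0 := hclass 0 1
    rw [mul_one, classVec_zero] at h0
    rw [h0, sub_self]
    exact zero_mem _
  · rw [diffVec, hclass, sub_self]
    exact zero_mem _
  · rw [hdiag, cellVec, hclass, sub_self]
    exact zero_mem _
  · by_cases hy : rel 4 x y
    · have hsingle : Pi.single y (1 : F) = classVec F x 4 * Pi.single y 1 := by
        rw [← Pi.single_mul_right, classVec, if_pos hy, one_mul]
      rw [hsingle, hclass, sub_self]
      exact zero_mem _
    · have hsingle := single_mem_cellSpan_of_not_rel_four F x hy
      rw [hmul, ← Pi.single_mul_right, mul_one, ← mul_one (classVec F x a y), ← smul_eq_mul,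
        Pi.single_smul]
      exact sub_mem (Submodule.smul_mem _ _ hsingle) (Submodule.smul_mem _ _ hsingle)

variable {F} (hn : (Fintype.card G : F) = 1) (hG : ∀ a : G, a ^ 2 = 1)
include hn hG

theorem sameCoord_mulVec_cellVec_sub_mem_centerSpan (h : {h : G // h ≠ 1}) (i : Fin 3)
    (j : Fin 4) :
    sameCoord F i *ᵥ cellVec F x h j - offLineCoeff F i j • lineVec F x i h ∈ centerSpan F x := by
  induction j using Fin.lastCases with
  | last =>
    change sameCoord F i *ᵥ (classVec F x 4 * lineVec F x 0 h) - offLineCoeff F i 3 • _ ∈ _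
    rw [sameCoord_mulVec_classVec_four_mul_lineVec hn x hG h.2, offLineCoeff_three]
    split_ifs
    · simp
    · simpa using classSpan_le_centerSpan F x (one_sub_lineVec_one_mem_classSpan F x i)
  | cast j =>
    rw [cellVec, sameCoord_mulVec_classVec_mul_lineVec F x hG h.2 (otherDir_castSucc_ne j).symm]
    rw [offLineCoeff_castSucc]
    split_ifs
    · simpa using lineVec_one_mem_centerSpan F x i
    · simp

theorem sameCoord_mem_symbolGraph (i : Fin 3) :
    (sameCoord F i, vecMulVec (offLine F i) (offLineCoeff F i), 0, 1) ∈ symbolGraph F x := by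
  have hrank (v : Fin 4 → XG G → F) (j : Fin 4) :
      ∑ l, vecMulVec (offLine F i) (offLineCoeff F i) l j • v l =
        offLineCoeff F i j • ∑ l, offLine F i l • v l := by
    simp_rw [vecMulVec_apply, mul_comm (offLine F i _), mul_smul, Finset.smul_sum]
  refine (mk_mem_symbolGraph_iff x).mpr ⟨fun j => ?_, ?_, fun q => ?_, fun h j => ?_, fun y => ?_⟩
  · rw [hrank fun l => classVec F x l.succ, sameCoord_mulVec_classVec_succ hn,
      one_sub_lineVec_one]
  · rw [sameCoord_mulVec_single F x, coord_self, lineVec_one, classVec_zero, one_smul,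
      add_sub_cancel_left]
    exact classVec_succ_mem_classSpan F x i.castSucc
  · have hmem := one_sub_lineVec_one_mem_classSpan F x i
    rw [zero_smul, sub_zero, diffVec, mul_sub, mulVec_sub,
      sameCoord_mulVec_classVec_four_mul_lineVec hn x hG q.1.2,
      sameCoord_mulVec_classVec_four_mul_lineVec hn x hG q.1.2]
    refine classSpan_le_centerSpan F x ?_
    split_ifs
    · simp
    · convert neg_mem hmem using 1
      abel
    · convert hmem using 1
      abel
    · simp
  · rw [hrank]
    have hline := Submodule.smul_mem _ (offLineCoeff F i j)
      (lineVec_sub_sum_cellVec_mem_diffSpan F x hG h i)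
    rw [smul_sub] at hline
    have hcell := sameCoord_mulVec_cellVec_sub_mem_centerSpan x hn hG h i j
    simpa using add_mem (centerSpan_le_diffSpan F x hcell) hline
  · rw [zero_smul, sub_zero, sameCoord_mulVec_single F x]
    exact lineVec_mem_cellSpan F x hG i _

theorem allOne_mem_symbolGraph : (AllOne F G, 0, 0, 1) ∈ symbolGraph F x := by
  refine (mk_mem_symbolGraph_iff x).mpr ⟨fun j => ?_, ?_, fun q => ?_, fun h j => ?_, fun y => ?_⟩
  · simpa using allOne_mulVec_classVec_succ hn x j
  · rw [allOne_mulVec_single, one_smul]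
    exact one_sub_single_mem_classSpan F x
  · rw [diffVec, mul_sub, mulVec_sub, allOne_mulVec_classVec_four_mul_lineVec hn x hG q.1.2,
      allOne_mulVec_classVec_four_mul_lineVec hn x hG q.1.2]
    simp
  · have hone := centerSpan_le_diffSpan F x (one_mem_centerSpan F x)
    have hcell : AllOne F G *ᵥ cellVec F x h j ∈ diffSpan F x := by
      induction j using Fin.lastCases with
      | last =>
        have h4 := allOne_mulVec_classVec_four_mul_lineVec hn x hG h.2 (otherDir 3)
        exact h4 ▸ neg_mem hone
      | cast j =>
        obtain ⟨y, -, hy⟩ := exists_classVec_mul_lineVec_eq_single F x hG h.2 j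
        rw [cellVec, (hy _ (otherDir_castSucc_ne j)).2, allOne_mulVec_single]
        exact hone
    simpa using hcell
  · rw [zero_smul, sub_zero, allOne_mulVec_single]
    exact diffSpan_le_cellSpan F x (centerSpan_le_diffSpan F x (one_mem_centerSpan F x))

theorem terwilligerAlg_le_map_symbolGraph :
    TerwilligerAlg F G x ≤ (symbolGraph F x).map (AlgHom.fst F _ _) :=
  terwilligerAlg_le F x (fun a => ⟨_, dualE_mem_symbolGraph F x a, rfl⟩)
    (fun i => ⟨_, sameCoord_mem_symbolGraph x hn hG i, rfl⟩)
    ⟨_, allOne_mem_symbolGraph x hn hG, rfl⟩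

end Generators

section Faithful

variable {F : Type} [Field F] {G : Type} [Group G] (x : XG G)

theorem rel_four_of_coord_ne (hG : ∀ a : G, a ^ 2 = 1) {i j : Fin 3} (hij : i ≠ j) {y : XG G}
    (hi : coord x i y ≠ 1) (hj : coord x j y ≠ 1) (hne : coord x i y ≠ coord x j y) :
    rel 4 x y := by
  refine rel_four_iff.mpr fun k hk => ?_
  rw [← coord_eq_coord_iff x, coord_self, eq_comm] at hk
  by_cases hki : k = i
  · exact hi (hki ▸ hk)
  by_cases hkj : k = j
  · exact hj (hkj ▸ hk)
  exact hne ((coord_eq_one_iff x hG hki hkj hij y).mp hk)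

theorem exists_rel_castSucc_succ [Nontrivial G] (j : Fin 3) : ∃ y, rel j.castSucc.succ x y := by
  obtain ⟨h, hh⟩ := exists_ne (1 : G)
  obtain ⟨k, hk⟩ := exists_ne j
  obtain ⟨y, ⟨hj, hky⟩, -⟩ := existsUnique_coord x hk.symm 1 h
  refine ⟨y, rel_castSucc_succ_iff.mpr ⟨?_, ?_⟩⟩
  · rintro rfl
    exact hh (hky.symm.trans (coord_self _ k))
  · rw [← coord_eq_coord_iff x, coord_self, hj]

variable [DecidableEq G]

theorem apply_eq_zero_of_mem_classSpan {v : XG G → F} (hv : v ∈ classSpan F x) : v x = 0 := by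
  have hle : classSpan F x ≤ LinearMap.ker (LinearMap.proj x : (XG G → F) →ₗ[F] F) :=
    adjoinVec_le bot_le fun _ j =>
      (classVec_apply_of_rel F x (rel_zero_iff.mpr rfl) j.succ).trans (if_neg (Fin.succ_ne_zero j))
  exact hle hv

theorem apply_eq_apply_of_mem_centerSpan {v : XG G → F} (hv : v ∈ centerSpan F x) {y z : XG G}
    (hy : rel 4 x y) (hz : rel 4 x z) : v y = v z := by
  have hclass (a : Fin 5) : classVec F x a y = classVec F x a z := by
    rw [classVec_apply_of_rel F x hy, classVec_apply_of_rel F x hz]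
  have hle : centerSpan F x ≤
      LinearMap.eqLocus (LinearMap.proj y : (XG G → F) →ₗ[F] F) (LinearMap.proj z) :=
    adjoinVec_le (adjoinVec_le bot_le fun _ j => hclass j.succ) fun _ _ =>
      classVec_zero F x ▸ hclass 0
  exact hle hv

theorem exists_diffVec_eq_one_and_eq_zero [Fintype G] (hG : ∀ a : G, a ^ 2 = 1)
    (hcard : 2 < Fintype.card G) :
    ∃ q y z, rel 4 x y ∧ rel 4 x z ∧ diffVec F x q y = 1 ∧ diffVec F x q z = 0 := by
  obtain ⟨g, h, hg, hh, hgh⟩ : ∃ g h : G, g ≠ 1 ∧ h ≠ 1 ∧ g ≠ h := by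
    obtain ⟨a, b, c, hab, hac, hbc⟩ := Fintype.two_lt_card_iff.mp hcard
    exact ⟨a⁻¹ * b, a⁻¹ * c, by simpa [inv_mul_eq_one], by simpa [inv_mul_eq_one], by simpa⟩
  have h02 : (0 : Fin 3) ≠ 2 := by decide
  obtain ⟨y, ⟨hy0, hy2⟩, -⟩ := existsUnique_coord x h02 g h
  obtain ⟨z, ⟨hz0, hz2⟩, -⟩ := existsUnique_coord x h02 h g
  have hy : rel 4 x y :=
    rel_four_of_coord_ne x hG h02 (by rwa [hy0]) (by rwa [hy2]) (by rwa [hy0, hy2])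
  have hz : rel 4 x z :=
    rel_four_of_coord_ne x hG h02 (by rwa [hz0]) (by rwa [hz2]) (by rwa [hz0, hz2, ne_comm])
  have hy1 : coord x 1 y ≠ g := by
    rwa [← hy0, ne_comm, Ne, ← coord_eq_one_iff x hG (i := 2) (by decide) (by decide) (by decide),
      hy2]
  have hz1 : coord x 1 z ≠ g := by
    rwa [← hz2, Ne, ← coord_eq_one_iff x hG (i := 0) (by decide) (by decide) (by decide), hz0]
  refine ⟨(⟨g, hg⟩, 0, 1), y, z, hy, hz, ?_, ?_⟩
  · simp [diffVec, classVec, lineVec, hy, hy0, hy1]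
  · simp [diffVec, lineVec, hz0, hz1, hgh.symm]

theorem eq_zero_of_zero_mk_mem_symbolGraph [Fintype G] (hG : ∀ a : G, a ^ 2 = 1)
    (hcard : 2 < Fintype.card G) {b : SymbolAlg F} (hb : (0, b) ∈ symbolGraph F x) : b = 0 := by
  obtain ⟨ρ, e, s⟩ := b
  obtain ⟨h₁, h₂, h₃, -, -⟩ := (mk_mem_symbolGraph_iff x).mp hb
  simp only [zero_mulVec, zero_sub] at h₁ h₂ h₃
  obtain ⟨q, y, z, hy, hz, hqy, hqz⟩ := exists_diffVec_eq_one_and_eq_zero (F := F) x hG hcard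
  have hρ : ρ = 0 := by
    have : Nontrivial G := Fintype.one_lt_card_iff_nontrivial.mp (one_lt_two.trans hcard)
    have hrel : ∀ i : Fin 4, ∃ w, rel i.succ x w :=
      Fin.lastCases ⟨y, hy⟩ (exists_rel_castSucc_succ x)
    ext i j
    obtain ⟨w, hw⟩ := hrel i
    simpa [classVec_apply_of_rel F x hw, eq_comm] using congrFun (h₁ j) w
  have hs : s = 0 := by simpa using apply_eq_zero_of_mem_classSpan x h₂
  have he : e = 0 := by simpa [hqy, hqz] using apply_eq_apply_of_mem_centerSpan x (h₃ q) hy hz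
  rw [hρ, hs, he]
  rfl

end Faithful

section Surjective

variable {F : Type} [Field F] {G : Type} [Group G] [Fintype G] [DecidableEq G] (x : XG G)
  (hn : (Fintype.card G : F) = 1) (hG : ∀ a : G, a ^ 2 = 1)
include hn hG

theorem exists_mem_terwilligerAlg_single_mem_symbolGraph (i j : Fin 4) :
    ∃ t ∈ TerwilligerAlg F G x, (t, Matrix.single i j (1 : F), 0, 0) ∈ symbolGraph F x := by
  obtain ⟨k, hki, hkj⟩ : ∃ k : Fin 3, i ≠ k.castSucc ∧ j ≠ k.castSucc := by decide +revert
  have hc : offLineCoeff F k j ≠ 0 := by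
    rw [offLineCoeff, if_neg hkj]
    split_ifs <;> simp
  have hmem := mul_mem (mul_mem (dualE_mem_symbolGraph F x i.succ)
    (sameCoord_mem_symbolGraph x hn hG k)) (dualE_mem_symbolGraph F x j.succ)
  have hblock : (Matrix.diagonal fun l : Fin 4 => if i.succ = l.succ then (1 : F) else 0) *
      vecMulVec (offLine F k) (offLineCoeff F k) *
        (Matrix.diagonal fun l : Fin 4 => if j.succ = l.succ then (1 : F) else 0) =
      offLineCoeff F k j • Matrix.single i j 1 := by
    ext a b
    rw [mul_diagonal, diagonal_mul, vecMulVec_apply, Matrix.smul_apply, single_apply]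
    simp only [Fin.succ_inj, offLine, smul_eq_mul]
    grind
  refine ⟨(offLineCoeff F k j)⁻¹ • (DualE F x i.succ * sameCoord F k * DualE F x j.succ),
    Subalgebra.smul_mem _ (dualE_mul_sameCoord_mul_dualE_mem_terwilligerAlg F x _ _ k) _, ?_⟩
  convert Subalgebra.smul_mem _ hmem (offLineCoeff F k j)⁻¹ using 1
  simp only [Prod.mk_mul_mk, Prod.smul_mk, hblock, smul_smul, inv_mul_cancel₀ hc]
  simp [Fin.succ_ne_zero]

theorem exists_mem_terwilligerAlg_mk_mem_symbolGraph (b : SymbolAlg F) :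
    ∃ t ∈ TerwilligerAlg F G x, (t, b) ∈ symbolGraph F x := by
  let S : Subalgebra F (SymbolAlg F) :=
    (symbolGraph F x ⊓ (TerwilligerAlg F G x).comap (AlgHom.fst F _ _)).map (AlgHom.snd F _ _)
  have hS {b : SymbolAlg F} : b ∈ S ↔ ∃ t ∈ TerwilligerAlg F G x, (t, b) ∈ symbolGraph F x := by
    constructor
    · rintro ⟨⟨t, b⟩, ⟨htb, ht⟩, rfl⟩
      exact ⟨t, ht, htb⟩
    · rintro ⟨t, ht, htb⟩
      exact ⟨(t, b), ⟨htb, ht⟩, rfl⟩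
  have hdual (a : Fin 5) := hS.mpr ⟨_, dualE_mem_terwilligerAlg F x a, dualE_mem_symbolGraph F x a⟩
  have hsingle (i j : Fin 4) : (Matrix.single i j 1, 0, 0) ∈ S :=
    hS.mpr (exists_mem_terwilligerAlg_single_mem_symbolGraph x hn hG i j)
  have hcenter : (0, 0, 1) ∈ S := by
    convert hdual 0 using 1
    simp [(Fin.succ_ne_zero _).symm]
  have hpoint : (0, 1, 0) ∈ S := by
    have hdiag : Matrix.diagonal (fun j : Fin 4 => if 4 = j.succ then (1 : F) else 0) =
        Matrix.single 3 3 1 := by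
      rw [← diagonal_single]
      congr 1
      ext j
      fin_cases j <;> rfl
    convert S.sub_mem (hdual 4) (hsingle 3 3) using 1
    simp [hdiag]
  obtain ⟨ρ, e, s⟩ := b
  have hsum : (ρ, e, s) = ∑ i, ∑ j, ρ i j • ((Matrix.single i j 1, 0, 0) : SymbolAlg F) +
      e • ((0, 1, 0) : SymbolAlg F) + s • ((0, 0, 1) : SymbolAlg F) := by
    ext a b <;> simp [Prod.fst_sum, Prod.snd_sum, ← matrix_eq_sum_single]
  rw [← hS, hsum]
  exact add_mem (add_mem (sum_mem fun i _ => sum_mem fun j _ => S.smul_mem (hsingle i j) _)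
    (S.smul_mem hpoint e)) (S.smul_mem hcenter s)

end Surjective

theorem stmt15 (F : Type) [Field F] (G : Type) [Group G] [Fintype G] [DecidableEq G]
    (helem : ∀ a : G, a ^ 2 = 1) (hcard : 3 ≤ Fintype.card G)
    (hn : (Fintype.card G : F) = 1) (x : XG G) :
    ∃ φ : TerwilligerAlg F G x →ₐ[F] (Matrix (Fin 4) (Fin 4) F × F × F),
      Function.Surjective φ ∧
      ∃ m : ℕ, 1 ≤ m ∧
        ∀ f : Fin m → TerwilligerAlg F G x,
          (∀ j, φ (f j) = 0) → (List.ofFn f).prod = 0 := by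
  obtain ⟨φ, hφ⟩ := exists_algHom_of_le_map_fst (terwilligerAlg_le_map_symbolGraph x hn helem)
    fun _ => eq_zero_of_zero_mk_mem_symbolGraph x helem hcard
  refine ⟨φ, fun b => ?_, 5, by norm_num, fun f hf => ?_⟩
  · obtain ⟨t, ht, htb⟩ := exists_mem_terwilligerAlg_mk_mem_symbolGraph x hn helem b
    exact ⟨⟨t, ht⟩, (hφ ⟨t, ht⟩ b).mp htb⟩
  · have hprod : ((List.ofFn f).map (TerwilligerAlg F G x).val).prod = 0 := by
      refine list_prod_eq_zero_of_mk_zero_mem_symbolGraph x ?_ (by simp)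
      simp only [List.mem_map, List.mem_ofFn]
      rintro _ ⟨_, ⟨j, rfl⟩, rfl⟩
      exact (hφ (f j) 0).mpr (hf j)
    exact Subtype.ext ((map_list_prod _ _).trans hprod)
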